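/- Let X be a real n×p matrix with XᵀX symmetric positive definite, and let u, w ∈ ℝᵖ be two of its rows with leverages h_u = uᵀ(XᵀX)⁻¹u and h_w = wᵀ(XᵀX)⁻¹w. If h_u ≤ h_w, then det(XᵀX − uuᵀ) ≥ det(XᵀX − wwᵀ). In particular, deleting the observation with the smallest leverage maximizes the determinant of the reduced information matrix. -/

import Mathlib

open Matrix

section DeterminantLemma

variable {m R : Type*} [Fintype m] [DecidableEq m] [CommRing R] {A : Matrix m m R}

theorem det_add_vecMulVec (hA : IsUnit A.det) (u v : m → R) :
    (A + vecMulVec u v).det = A.det * (1 + v ⬝ᵥ (A⁻¹ *ᵥ u)) := by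
  rw [vecMulVec_eq Unit, det_add_replicateCol_mul_replicateRow hA, det_unique (n := Unit),
    Matrix.mul_assoc, ← replicateCol_mulVec, Matrix.add_apply, one_apply_eq,
    replicateRow_mul_replicateCol_apply]

theorem det_sub_vecMulVec (hA : IsUnit A.det) (u v : m → R) :
    (A - vecMulVec u v).det = A.det * (1 - v ⬝ᵥ (A⁻¹ *ᵥ u)) := by
  rw [sub_eq_add_neg, ← neg_vecMulVec, det_add_vecMulVec hA, mulVec_neg, dotProduct_neg,
    ← sub_eq_add_neg]

theorem det_delete_monotone_in_leverage_general [LinearOrder R] [IsStrictOrderedRing R]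
    (hA : IsUnit A.det) (hpos : 0 < A.det) (u w : m → R) :
    (A - vecMulVec w w).det ≤ (A - vecMulVec u u).det ↔
      u ⬝ᵥ (A⁻¹ *ᵥ u) ≤ w ⬝ᵥ (A⁻¹ *ᵥ w) := by
  rw [det_sub_vecMulVec hA, det_sub_vecMulVec hA, mul_le_mul_iff_right₀ hpos,
    sub_le_sub_iff_left]

end DeterminantLemma

/-- Deletion step of the D-optimal exchange algorithm: if `u = X i` and `w = X j` are
two rows of `X` with leverages `h_u ≤ h_w` (with `XᵀX` symmetric positive definite),
then `det(XᵀX − uuᵀ) ≥ det(XᵀX − wwᵀ)`; hence deleting the observation with the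
smallest leverage maximizes the determinant of the reduced information matrix. -/
theorem det_delete_monotone_in_leverage {n p : ℕ} (X : Matrix (Fin n) (Fin p) ℝ)
    (hM : (Xᵀ * X).PosDef) (i j : Fin n)
    (u w : Fin p → ℝ) (hu : u = X i) (hw : w = X j)
    (h : u ⬝ᵥ ((Xᵀ * X)⁻¹ *ᵥ u) ≤ w ⬝ᵥ ((Xᵀ * X)⁻¹ *ᵥ w)) :
    (Xᵀ * X - vecMulVec w w).det ≤ (Xᵀ * X - vecMulVec u u).det :=
  (det_delete_monotone_in_leverage_general hM.det_pos.ne'.isUnit hM.det_pos u w).mpr h
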